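/- Van der Corput-type decay with scaling: let ν be a measure with ν̂(ξ) = ∫_{[1/2,4]ⁿ} [e^{iξQ₁(t)} − e^{iξQ₂(t)}] η(t₁)⋯η(tₙ) dt where Q₁, Q₂ are polynomials of bounded degree whose coefficients are bounded and such that some partial derivative ∂^α Q₁ and ∂^α Q₂ (1 ≤ |α| ≤ deg) are bounded below on the support. Then there exist C, ε > 0 (depending only on the degree and the lower/upper bounds on the coefficients) such that |ν̂(ξ)| ≤ C|ξ|^{-ε} for all ξ ≠ 0. -/

import Mathlib

open MeasureTheory

namespace MvPolynomial

theorem hasFDerivAt_eval {ι : Type*} [Fintype ι] [DecidableEq ι] (p : MvPolynomial ι ℝ)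
    (x : ι → ℝ) :
    HasFDerivAt (fun t => eval t p)
      (∑ i, eval x (pderiv i p) • ContinuousLinearMap.proj (R := ℝ) (φ := fun _ : ι => ℝ) i) x := by
  induction p using MvPolynomial.induction_on with
  | C a => simpa using hasFDerivAt_const a x
  | add p q hp hq =>
    simp only [map_add, add_smul, Finset.sum_add_distrib]
    exact hp.add hq
  | mul_X p j hp =>
    have hj : HasFDerivAt (fun t : ι → ℝ => t j)
        (ContinuousLinearMap.proj (R := ℝ) (φ := fun _ : ι => ℝ) j) x := hasFDerivAt_apply j x
    have h := hp.mul hj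
    simp only [map_mul, eval_X]
    refine h.congr_fderiv ?_
    ext v
    simp [Derivation.leibniz, pderiv_X, add_mul, Finset.sum_add_distrib, Finset.mul_sum,
      Pi.single_apply, mul_assoc, apply_ite]

theorem totalDegree_pderiv_le {ι : Type*} (i : ι) (p : MvPolynomial ι ℝ) :
    (pderiv i p).totalDegree ≤ p.totalDegree := by
  refine Finset.sup_le fun m hm => ?_
  rw [mem_support_iff, coeff_pderiv] at hm
  have h := le_totalDegree (mem_support_iff.2 (left_ne_zero_of_mul hm))
  rw [Finsupp.sum_add_index' (fun _ => rfl) (fun _ _ _ => rfl)] at h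
  omega

theorem abs_coeff_pderiv_le {ι : Type*} {D : ℕ} {M : ℝ} (i : ι) {p : MvPolynomial ι ℝ}
    (hD : p.totalDegree ≤ D) (hM : ∀ m, |p.coeff m| ≤ M) (m : ι →₀ ℕ) :
    |(pderiv i p).coeff m| ≤ M * D := by
  have hM0 : 0 ≤ M := (abs_nonneg _).trans (hM 0)
  rw [coeff_pderiv]
  by_cases h : p.coeff (m + Finsupp.single i 1) = 0
  · rw [h, zero_mul, abs_zero]; positivity
  have hdeg : m i + 1 ≤ D := by
    refine le_trans ?_ hD
    calc m i + 1 = (m + Finsupp.single i 1 : ι →₀ ℕ) i := by simp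
      _ ≤ (m + Finsupp.single i 1 : ι →₀ ℕ).sum fun _ e => e :=
        Finset.single_le_sum (f := fun j => (m + Finsupp.single i 1 : ι →₀ ℕ) j)
          (fun _ _ => Nat.zero_le _) (by simp)
      _ ≤ p.totalDegree := le_totalDegree (mem_support_iff.2 h)
  rw [abs_mul]
  have h0 : (0 : ℝ) ≤ (m i : ℝ) + 1 := by positivity
  gcongr
  · exact hM _
  · rw [abs_of_nonneg h0]; exact_mod_cast hdeg

theorem exists_abs_eval_le {ι : Type*} [Fintype ι] (D : ℕ) {M r : ℝ} (hM : 0 ≤ M) (hr : 0 ≤ r) :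
    ∃ B ≥ (0 : ℝ), ∀ p : MvPolynomial ι ℝ, p.totalDegree ≤ D → (∀ m, |p.coeff m| ≤ M) →
      ∀ t : ι → ℝ, (∀ i, |t i| ≤ r) → |eval t p| ≤ B := by
  classical
  let S := (Finsupp.finite_of_degree_le (σ := ι) D).toFinset
  refine ⟨∑ m ∈ S, M * ∏ i, r ^ m i, by positivity, fun p hD hp t ht => ?_⟩
  have hsub : p.support ⊆ S := fun m hm => by
    simpa [S, Finsupp.degree_apply, Finsupp.sum] using (le_totalDegree hm).trans hD
  rw [eval_eq']
  calc |∑ m ∈ p.support, p.coeff m * ∏ i, t i ^ m i|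
      ≤ ∑ m ∈ p.support, |p.coeff m * ∏ i, t i ^ m i| := Finset.abs_sum_le_sum_abs _ _
    _ ≤ ∑ m ∈ p.support, M * ∏ i, r ^ m i := by
        refine Finset.sum_le_sum fun m _ => ?_
        rw [abs_mul, Finset.abs_prod]
        simp only [abs_pow]
        gcongr with i
        · exact hp m
        · exact ht i
    _ ≤ _ := Finset.sum_le_sum_of_subset_of_nonneg hsub fun _ _ _ => by positivity

end MvPolynomial

theorem norm_setIntegral_Icc_fderiv_single_le {n : ℕ} {a b : Fin (n + 1) → ℝ} (hle : a ≤ b)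
    (j : Fin (n + 1)) {w : (Fin (n + 1) → ℝ) → ℂ} (hw : ContDiff ℝ 1 w) {A : ℝ}
    (hA : ∀ x ∈ Set.Icc a b, ‖w x‖ ≤ A) :
    ‖∫ x in Set.Icc a b, fderiv ℝ w x (Pi.single j 1)‖ ≤
      2 * A * volume.real (Set.Icc (a ∘ j.succAbove) (b ∘ j.succAbove)) := by
  have hcont : Continuous fun x => fderiv ℝ w x (Pi.single j 1) :=
    (hw.continuous_fderiv one_ne_zero).clm_apply continuous_const
  have key := integral_divergence_of_hasFDerivAt_off_countable' a b hle
    (fun i => if i = j then w else 0) (fun i => if i = j then fderiv ℝ w else 0) ∅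
    Set.countable_empty
    (fun i => by split_ifs; exacts [hw.continuous.continuousOn, continuousOn_const])
    (fun x _ i => by
      split_ifs
      exacts [(hw.differentiable one_ne_zero x).hasFDerivAt, hasFDerivAt_const 0 x])
    (by
      refine (Continuous.integrableOn_Icc ?_)
      refine continuous_finsetSum _ fun i _ => ?_
      by_cases h : i = j
      · subst h; simpa using hcont
      · simpa [h] using continuous_const)
  rw [Finset.sum_eq_single j (by simp +contextual) (by simp)] at key
  have hL : ∀ x, ∑ i, (if i = j then fderiv ℝ w else 0) x (Pi.single i 1) =
      fderiv ℝ w x (Pi.single j 1) := fun x => by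
    rw [Finset.sum_eq_single j (by simp +contextual) (by simp)]; simp
  simp only [hL, if_true] at key
  rw [key]
  have hface : ∀ c, a j ≤ c → c ≤ b j →
      ‖∫ x in Set.Icc (a ∘ j.succAbove) (b ∘ j.succAbove), w (j.insertNth c x)‖ ≤
        A * volume.real (Set.Icc (a ∘ j.succAbove) (b ∘ j.succAbove)) := fun c h1 h2 =>
    norm_setIntegral_le_of_norm_le_const isCompact_Icc.measure_lt_top fun x hx => by
      refine hA _ ?_
      rw [Fin.insertNth_mem_Icc]
      exact ⟨⟨h1, h2⟩, hx⟩
  refine (norm_sub_le _ _).trans ?_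
  linarith [hface (a j) le_rfl (hle j), hface (b j) (hle j) le_rfl]

theorem hasDerivAt_div_sq_add_sq {g : ℝ → ℝ} {g' x ρ : ℝ} (hg : HasDerivAt g g' x) (hρ : 0 < ρ) :
    HasDerivAt (fun s => g s / (g s ^ 2 + ρ ^ 2))
      (g' * (ρ ^ 2 - g x ^ 2) / (g x ^ 2 + ρ ^ 2) ^ 2) x := by
  have hne : g x ^ 2 + ρ ^ 2 ≠ 0 := by positivity
  refine (hg.div ((hg.pow 2).add_const (ρ ^ 2)) hne).congr_deriv ?_
  simp only [Nat.cast_ofNat, Pi.pow_apply]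
  congr 1
  ring

theorem hasDerivAt_comp_div_mul {F : ℝ → ℂ} {Q S : ℝ → ℝ} {ψ : ℝ → ℂ} {f ψ' : ℂ}
    {S₁ S' h ρ x : ℝ} (hF : HasDerivAt F f (Q x / h)) (hQ : HasDerivAt Q S₁ x)
    (hS : HasDerivAt S S' x) (hψ : HasDerivAt ψ ψ' x) (hh : 0 < h) (hρ : 0 < ρ) :
    HasDerivAt (fun s => h * F (Q s / h) * ((S s / (S s ^ 2 + ρ ^ 2) : ℝ) * ψ s))
      (f * S₁ * ((S x / (S x ^ 2 + ρ ^ 2) : ℝ) * ψ x) + h * F (Q x / h) *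
        ((S' * (ρ ^ 2 - S x ^ 2) / (S x ^ 2 + ρ ^ 2) ^ 2 : ℝ) * ψ x +
          (S x / (S x ^ 2 + ρ ^ 2) : ℝ) * ψ')) x := by
  have hS1 := (hasDerivAt_div_sq_add_sq hS hρ).ofReal_comp
  have hF1 : HasDerivAt (fun s => F (Q s / h)) ((S₁ / h) • f) x := hF.scomp x (hQ.div_const h)
  refine ((hF1.const_mul (h : ℂ)).mul (hS1.mul hψ)).congr_deriv ?_
  have hhc : (h : ℂ) ≠ 0 := by exact_mod_cast hh.ne'
  have : (h : ℂ) * (S₁ / h) • f = f * S₁ := by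
    rw [Complex.real_smul]; push_cast; field_simp
  rw [this]
  rfl

theorem abs_div_sq_add_sq_le {s ρ : ℝ} (hρ : 0 < ρ) (hρ1 : ρ ≤ 1) :
    |s / (s ^ 2 + ρ ^ 2)| ≤ (ρ ^ 2)⁻¹ := by
  have hpos : 0 < s ^ 2 + ρ ^ 2 := by positivity
  rw [abs_div, abs_of_pos hpos, div_le_iff₀ hpos, inv_mul_eq_div, le_div_iff₀ (by positivity)]
  have hρ2 : ρ ^ 2 ≤ ρ := by nlinarith
  have h1 : |s| * ρ ^ 2 ≤ |s| * ρ := by gcongr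
  nlinarith [sq_nonneg (|s| - ρ), sq_abs s, abs_nonneg s]

theorem abs_mul_sub_div_sq_le {s s' ρ B : ℝ} (hρ : 0 < ρ) (hs' : |s'| ≤ B) :
    |s' * (ρ ^ 2 - s ^ 2) / (s ^ 2 + ρ ^ 2) ^ 2| ≤ B * (ρ ^ 2)⁻¹ := by
  have hpos : 0 < s ^ 2 + ρ ^ 2 := by positivity
  have h : |(ρ ^ 2 - s ^ 2) / (s ^ 2 + ρ ^ 2) ^ 2| ≤ (ρ ^ 2)⁻¹ := by
    rw [abs_div, abs_of_pos (pow_pos hpos 2), div_le_iff₀ (by positivity), inv_mul_eq_div,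
      le_div_iff₀ (by positivity), sq (s ^ 2 + ρ ^ 2)]
    exact mul_le_mul (abs_le.2 ⟨by nlinarith [sq_nonneg s], by nlinarith [sq_nonneg s]⟩)
      (by nlinarith [sq_nonneg s]) (by positivity) hpos.le
  rw [mul_div_assoc, abs_mul]
  exact mul_le_mul hs' h (abs_nonneg _) ((abs_nonneg _).trans hs')

theorem MvPolynomial.contDiff_eval {ι : Type*} [Fintype ι] (p : MvPolynomial ι ℝ) :
    ContDiff ℝ 1 fun t : ι → ℝ => eval t p := by
  simp only [eval_eq']
  fun_prop

open MvPolynomial in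
theorem exists_norm_setIntegral_comp_div_le {n D : ℕ} {a b : Fin (n + 1) → ℝ} (hle : a ≤ b)
    {M κ : ℝ} (hM : 0 ≤ M) (hκ1 : κ ≤ 1)
    {ψ : (Fin (n + 1) → ℝ) → ℂ} (hψ : ContDiff ℝ 1 ψ) :
    ∃ C > (0 : ℝ), ∀ F f : ℝ → ℂ, (∀ x, HasDerivAt F (f x) x) → Continuous f →
      (∀ x, ‖F x‖ ≤ 2) → (∀ x, ‖f x‖ ≤ 1) →
      ∀ Q : MvPolynomial (Fin (n + 1)) ℝ, Q.totalDegree ≤ D → (∀ m, |Q.coeff m| ≤ M) →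
      ∀ (j : Fin (n + 1)) (K : ℝ),
        (∀ ρ : ℝ, 0 < ρ → ρ ≤ 1 →
          ∫ x in Set.Icc a b, (1 + (eval x (pderiv j Q) / ρ) ^ 2)⁻¹ ≤ K * ρ ^ κ) →
      ∀ h : ℝ, 0 < h → h ≤ 1 →
        ‖∫ x in Set.Icc a b, f (eval x Q / h) * ψ x‖ ≤ C * (1 + K) * h ^ (κ / 4) := by
  obtain ⟨B₀, hB₀⟩ := isCompact_Icc.exists_bound_of_continuousOn
    (hψ.continuous.continuousOn (s := Set.Icc a b))
  have hB₀0 : 0 ≤ B₀ := (norm_nonneg _).trans (hB₀ a (Set.left_mem_Icc.2 hle))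
  obtain ⟨B₁, hB₁⟩ := isCompact_Icc.exists_bound_of_continuousOn
    ((hψ.continuous_fderiv one_ne_zero).continuousOn (s := Set.Icc a b))
  have hB₁0 : 0 ≤ B₁ := (norm_nonneg _).trans (hB₁ a (Set.left_mem_Icc.2 hle))
  obtain ⟨B₂, hB₂0, hB₂⟩ := exists_abs_eval_le (ι := Fin (n + 1)) D
    (M := M * D * D) (r := ‖a‖ + ‖b‖) (by positivity) (by positivity)
  set V := volume.real (Set.Icc a b)
  set W := ∑ j : Fin (n + 1), volume.real (Set.Icc (a ∘ j.succAbove) (b ∘ j.succAbove))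
  have hV0 : 0 ≤ V := measureReal_nonneg
  have hW0 : 0 ≤ W := Finset.sum_nonneg fun _ _ => measureReal_nonneg
  refine ⟨4 * B₀ * W + 2 * (B₂ * B₀ + B₁) * V + B₀ + 1, by positivity, ?_⟩
  intro F f hF hf hF2 hf1 Q hQD hQM j K hK h hh hh1
  set S := pderiv j Q
  set ρ := h ^ (1 / 4 : ℝ) with hρdef
  have hρ : 0 < ρ := Real.rpow_pos_of_pos hh _
  have hρ1 : ρ ≤ 1 := Real.rpow_le_one hh.le hh1 (by norm_num)
  have hρκ : ρ ^ κ = h ^ (κ / 4) := by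
    rw [hρdef, ← Real.rpow_mul hh.le]; congr 1; ring
  have hhρ : h * (ρ ^ 2)⁻¹ ≤ h ^ (κ / 4) := by
    have : h * (ρ ^ 2)⁻¹ = h ^ (1 / 2 : ℝ) := by
      rw [hρdef, ← Real.rpow_natCast, ← Real.rpow_mul hh.le, ← Real.rpow_neg hh.le]
      nth_rewrite 1 [← Real.rpow_one h]
      rw [← Real.rpow_add hh]
      norm_num
    rw [this]
    exact Real.rpow_le_rpow_of_exponent_ge hh hh1 (by linarith)
  have hK0 : 0 ≤ K := by
    have := (setIntegral_nonneg measurableSet_Icc fun x _ => by positivity).trans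
      (hK 1 one_pos le_rfl)
    simpa using this
  have hSdeg : S.totalDegree ≤ D := (totalDegree_pderiv_le j Q).trans hQD
  have hScoeff : ∀ m, |S.coeff m| ≤ M * D := abs_coeff_pderiv_le j hQD hQM
  have hS' : ∀ x ∈ Set.Icc a b, |eval x (pderiv j S)| ≤ B₂ := fun x hx =>
    hB₂ _ ((totalDegree_pderiv_le j S).trans hSdeg) (abs_coeff_pderiv_le j hSdeg hScoeff) x
      fun i => by
        have h1 := (abs_le.1 ((Real.norm_eq_abs _).symm.trans_le (norm_le_pi_norm a i))).1
        have h2 := (abs_le.1 ((Real.norm_eq_abs _).symm.trans_le (norm_le_pi_norm b i))).2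
        exact abs_le.2 ⟨by linarith [hx.1 i, norm_nonneg b], by linarith [hx.2 i, norm_nonneg a]⟩
  have hline : ∀ (p : MvPolynomial (Fin (n + 1)) ℝ) x,
      HasDerivAt (fun s : ℝ => eval (x + s • Pi.single j (1 : ℝ)) p) (eval x (pderiv j p)) 0 := by
    intro p x
    have := (hasFDerivAt_eval p x).hasLineDerivAt (Pi.single j (1 : ℝ))
    simpa [HasLineDerivAt, Pi.single_apply] using this
  let q : (Fin (n + 1) → ℝ) → ℝ := fun x => eval x S / (eval x S ^ 2 + ρ ^ 2)
  let q' : (Fin (n + 1) → ℝ) → ℝ := fun x =>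
    eval x (pderiv j S) * (ρ ^ 2 - eval x S ^ 2) / (eval x S ^ 2 + ρ ^ 2) ^ 2
  have hne : ∀ x, eval x S ^ 2 + ρ ^ 2 ≠ 0 := fun x => by positivity
  have hcS := contDiff_eval S
  have hcQ := contDiff_eval Q
  have hcS' := contDiff_eval (pderiv j S)
  have hq : ContDiff ℝ 1 q := hcS.div ((hcS.pow 2).add contDiff_const) hne
  have hq'c : Continuous q' :=
    (hcS'.continuous.mul (continuous_const.sub (hcS.continuous.pow 2))).div
      (((hcS.continuous.pow 2).add continuous_const).pow 2) fun x => pow_ne_zero 2 (hne x)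
  have hFc : ContDiff ℝ 1 F := contDiff_one_iff_deriv.2
    ⟨fun x => (hF x).differentiableAt, by simpa [funext fun x => (hF x).deriv] using hf⟩
  let w : (Fin (n + 1) → ℝ) → ℂ := fun x => h * F (eval x Q / h) * (q x * ψ x)
  have hw : ContDiff ℝ 1 w :=
    (contDiff_const.mul (hFc.comp (hcQ.div_const h))).mul
      ((Complex.ofRealCLM.contDiff.comp hq).mul hψ)
  let ψ' : (Fin (n + 1) → ℝ) → ℂ := fun x => fderiv ℝ ψ x (Pi.single j 1)
  have hψ'c : Continuous ψ' := (hψ.continuous_fderiv one_ne_zero).clm_apply continuous_const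
  let r : (Fin (n + 1) → ℝ) → ℂ := fun x => h * F (eval x Q / h) * (q' x * ψ x + q x * ψ' x)
  let u : (Fin (n + 1) → ℝ) → ℂ := fun x =>
    f (eval x Q / h) * ψ x * ((1 + (eval x S / ρ) ^ 2)⁻¹ : ℝ)
  have hderiv : ∀ x, fderiv ℝ w x (Pi.single j 1) =
      f (eval x Q / h) * eval x S * (q x * ψ x) + r x := by
    intro x
    have h1 : HasDerivAt (fun s : ℝ => w (x + s • Pi.single j (1 : ℝ)))
        (fderiv ℝ w x (Pi.single j 1)) 0 :=
      (hw.differentiable one_ne_zero x).hasFDerivAt.hasLineDerivAt (Pi.single j (1 : ℝ))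
    have hψ1 : HasDerivAt (fun s : ℝ => ψ (x + s • Pi.single j (1 : ℝ))) (ψ' x) 0 :=
      (hψ.differentiable one_ne_zero x).hasFDerivAt.hasLineDerivAt (Pi.single j (1 : ℝ))
    have h2 := hasDerivAt_comp_div_mul (hF _) (hline Q x) (hline S x) hψ1 hh hρ
    have h3 := h1.unique h2
    simp only [zero_smul, add_zero] at h3
    exact h3
  have hsplit : ∀ x, f (eval x Q / h) * ψ x = fderiv ℝ w x (Pi.single j 1) - r x + u x := by
    intro x
    rw [hderiv, add_sub_cancel_right]
    have : eval x S * q x + (1 + (eval x S / ρ) ^ 2)⁻¹ = 1 := by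
      have := hne x
      have h3 : 1 + (eval x S / ρ) ^ 2 = (eval x S ^ 2 + ρ ^ 2) / ρ ^ 2 := by
        field_simp; ring
      simp only [q, h3]
      field_simp
    have hc : (eval x S : ℂ) * q x + ((1 + (eval x S / ρ) ^ 2)⁻¹ : ℝ) = 1 := by exact_mod_cast this
    simp only [u]
    linear_combination (-(f (eval x Q / h) * ψ x)) * hc
  have hcFQ : Continuous fun x => F (eval x Q / h) :=
    hFc.continuous.comp (hcQ.continuous.div_const h)
  have hcfQ : Continuous fun x => f (eval x Q / h) := hf.comp (hcQ.continuous.div_const h)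
  have hcwt : Continuous fun x => (1 + (eval x S / ρ) ^ 2)⁻¹ :=
    (continuous_const.add ((hcS.continuous.div_const ρ).pow 2)).inv₀ fun x =>
      (by positivity : (0 : ℝ) < 1 + (eval x S / ρ) ^ 2).ne'
  have hrc : Continuous r :=
    (continuous_const.mul hcFQ).mul (((Complex.continuous_ofReal.comp hq'c).mul hψ.continuous).add
      ((Complex.continuous_ofReal.comp hq.continuous).mul hψ'c))
  have huc : Continuous u := (hcfQ.mul hψ.continuous).mul (Complex.continuous_ofReal.comp hcwt)
  have hdc : Continuous fun x => fderiv ℝ w x (Pi.single j 1) :=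
    (hw.continuous_fderiv one_ne_zero).clm_apply continuous_const
  have hqb : ∀ x, |q x| ≤ (ρ ^ 2)⁻¹ := fun x => abs_div_sq_add_sq_le hρ hρ1
  have hhF : ∀ x, ‖(h : ℂ) * F (eval x Q / h)‖ ≤ h * 2 := fun x => by
    rw [norm_mul, Complex.norm_real, Real.norm_of_nonneg hh.le]
    gcongr
    exact hF2 _
  have hwb : ∀ x ∈ Set.Icc a b, ‖w x‖ ≤ h * 2 * ((ρ ^ 2)⁻¹ * B₀) := fun x hx => by
    simp only [w]
    rw [norm_mul, norm_mul (q x : ℂ), Complex.norm_real]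
    gcongr
    exacts [hhF x, hqb x, hB₀ x hx]
  have hrb : ∀ x ∈ Set.Icc a b, ‖r x‖ ≤ h * 2 * (B₂ * (ρ ^ 2)⁻¹ * B₀ + (ρ ^ 2)⁻¹ * B₁) :=
    fun x hx => by
      have hψ'b : ‖ψ' x‖ ≤ B₁ := by
        refine ((fderiv ℝ ψ x).le_opNorm _).trans ?_
        have : ‖(Pi.single j (1 : ℝ) : Fin (n + 1) → ℝ)‖ = 1 :=
          (Pi.norm_single (G := fun _ : Fin (n + 1) => ℝ) (i := j) (1 : ℝ)).trans norm_one
        rw [this, mul_one]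
        exact hB₁ x hx
      simp only [r]
      rw [norm_mul]
      refine mul_le_mul (hhF x) ((norm_add_le _ _).trans ?_) (norm_nonneg _) (by positivity)
      rw [norm_mul, norm_mul (q x : ℂ), Complex.norm_real, Complex.norm_real]
      gcongr
      exacts [abs_mul_sub_div_sq_le hρ (hS' x hx), hB₀ x hx, hqb x]
  have I1 : ‖∫ x in Set.Icc a b, fderiv ℝ w x (Pi.single j 1)‖ ≤
      2 * (h * 2 * ((ρ ^ 2)⁻¹ * B₀)) * W := by
    refine (norm_setIntegral_Icc_fderiv_single_le hle j hw hwb).trans ?_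
    gcongr
    exact Finset.single_le_sum (f := fun j : Fin (n + 1) =>
      volume.real (Set.Icc (a ∘ j.succAbove) (b ∘ j.succAbove)))
      (fun _ _ => measureReal_nonneg) (Finset.mem_univ j)
  have I2 : ‖∫ x in Set.Icc a b, r x‖ ≤ h * 2 * (B₂ * (ρ ^ 2)⁻¹ * B₀ + (ρ ^ 2)⁻¹ * B₁) * V :=
    norm_setIntegral_le_of_norm_le_const isCompact_Icc.measure_lt_top hrb
  have I3 : ‖∫ x in Set.Icc a b, u x‖ ≤ B₀ * (K * h ^ (κ / 4)) := by
    calc ‖∫ x in Set.Icc a b, u x‖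
        ≤ ∫ x in Set.Icc a b, B₀ * (1 + (eval x S / ρ) ^ 2)⁻¹ := by
          refine norm_integral_le_of_norm_le (hcwt.integrableOn_Icc.const_mul B₀) ?_
          refine (ae_restrict_iff' measurableSet_Icc).2 (Filter.Eventually.of_forall fun x hx => ?_)
          rw [norm_mul, norm_mul, Complex.norm_real, Real.norm_of_nonneg (by positivity)]
          gcongr
          calc _ ≤ 1 * B₀ := mul_le_mul (hf1 _) (hB₀ x hx) (norm_nonneg _) zero_le_one
            _ = B₀ := one_mul _
      _ = B₀ * ∫ x in Set.Icc a b, (1 + (eval x S / ρ) ^ 2)⁻¹ := integral_const_mul _ _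
      _ ≤ B₀ * (K * h ^ (κ / 4)) := by rw [← hρκ]; gcongr; exact hK ρ hρ hρ1
  have hint : ∫ x in Set.Icc a b, f (eval x Q / h) * ψ x =
      (∫ x in Set.Icc a b, fderiv ℝ w x (Pi.single j 1)) - (∫ x in Set.Icc a b, r x) +
        ∫ x in Set.Icc a b, u x := by
    simp only [hsplit]
    rw [integral_add (f := fun x => fderiv ℝ w x (Pi.single j 1) - r x)
      (hdc.integrableOn_Icc.sub hrc.integrableOn_Icc) huc.integrableOn_Icc,
      integral_sub hdc.integrableOn_Icc hrc.integrableOn_Icc]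
  rw [hint]
  refine (norm_add_le _ _).trans ((add_le_add ((norm_sub_le _ _).trans (add_le_add I1 I2)) I3).trans
    ?_)
  set H := h ^ (κ / 4)
  have hH : 0 ≤ H := Real.rpow_nonneg hh.le _
  set T := 4 * B₀ * W + 2 * (B₂ * B₀ + B₁) * V with hT
  have hT0 : 0 ≤ T := by positivity
  calc _ = T * (h * (ρ ^ 2)⁻¹) + B₀ * (K * H) := by rw [hT]; ring
    _ ≤ T * H + B₀ * (K * H) := by gcongr
    _ ≤ _ := by
      have : 0 ≤ (T * K + B₀ + 1 + K) * H := by positivity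
      linarith

open MvPolynomial in
theorem exists_setIntegral_inv_one_add_sq_le {n : ℕ} (D : ℕ) {a b : Fin (n + 1) → ℝ} (hle : a ≤ b)
    {c : ℝ} (hc : 0 < c) (k : ℕ) : ∀ M : ℝ, 0 ≤ M →
    ∃ K ≥ (0 : ℝ), ∀ R : MvPolynomial (Fin (n + 1)) ℝ, R.totalDegree ≤ D →
      (∀ m, |R.coeff m| ≤ M) → ∀ L : List (Fin (n + 1)), L.length ≤ k →
      (∀ t ∈ Set.Icc a b, c ≤ |eval t (L.foldl (fun R i => pderiv i R) R)|) →
      ∀ ρ : ℝ, 0 < ρ → ρ ≤ 1 →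
        ∫ x in Set.Icc a b, (1 + (eval x R / ρ) ^ 2)⁻¹ ≤ K * ρ ^ ((1 / 4 : ℝ) ^ k) := by
  have hbase : ∀ (k : ℕ) (R : MvPolynomial (Fin (n + 1)) ℝ), (∀ t ∈ Set.Icc a b, c ≤ |eval t R|) →
      ∀ ρ : ℝ, 0 < ρ → ρ ≤ 1 → ∫ x in Set.Icc a b, (1 + (eval x R / ρ) ^ 2)⁻¹ ≤
        (c ^ 2)⁻¹ * volume.real (Set.Icc a b) * ρ ^ ((1 / 4 : ℝ) ^ k) := by
    intro k R hR ρ hρ hρ1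
    have h1 : ‖∫ x in Set.Icc a b, (1 + (eval x R / ρ) ^ 2)⁻¹‖ ≤
        (c ^ 2)⁻¹ * ρ ^ 2 * volume.real (Set.Icc a b) := by
      refine norm_setIntegral_le_of_norm_le_const isCompact_Icc.measure_lt_top fun x hx => ?_
      rw [Real.norm_of_nonneg (by positivity), ← inv_inv (ρ ^ 2), ← mul_inv]
      gcongr
      rw [div_pow, div_eq_mul_inv]
      have : c ^ 2 ≤ eval x R ^ 2 := by
        rw [← sq_abs (eval x R)]; gcongr; exact hR x hx
      have : c ^ 2 * (ρ ^ 2)⁻¹ ≤ eval x R ^ 2 * (ρ ^ 2)⁻¹ := by gcongr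
      linarith
    have h2 : ρ ^ 2 ≤ ρ ^ ((1 / 4 : ℝ) ^ k) := by
      rw [← Real.rpow_natCast]
      refine Real.rpow_le_rpow_of_exponent_ge hρ hρ1 ?_
      have : (1 / 4 : ℝ) ^ k ≤ 1 := pow_le_one₀ (by norm_num) (by norm_num)
      norm_num at this ⊢; linarith
    calc _ ≤ _ := Real.le_norm_self _
      _ ≤ (c ^ 2)⁻¹ * ρ ^ 2 * volume.real (Set.Icc a b) := h1
      _ = (c ^ 2)⁻¹ * volume.real (Set.Icc a b) * ρ ^ 2 := by ring
      _ ≤ _ := by gcongr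
  induction k with
  | zero =>
    intro M _
    refine ⟨(c ^ 2)⁻¹ * volume.real (Set.Icc a b), by positivity, fun R _ _ L hL hR => ?_⟩
    obtain rfl := List.length_eq_zero_iff.1 (Nat.le_zero.1 hL)
    exact hbase 0 R hR
  | succ k ih =>
    intro M hM
    obtain ⟨K, hK0, hK⟩ := ih (M * D) (by positivity)
    obtain ⟨C, hC0, hC⟩ := exists_norm_setIntegral_comp_div_le (D := D) hle hM
      (κ := (1 / 4 : ℝ) ^ k) (pow_le_one₀ (by norm_num) (by norm_num)) (ψ := fun _ => 1)
      contDiff_const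
    refine ⟨(c ^ 2)⁻¹ * volume.real (Set.Icc a b) + C * (1 + K), by positivity,
      fun R hRD hRM L hL hR ρ hρ hρ1 => ?_⟩
    have hρk : 0 ≤ ρ ^ ((1 / 4 : ℝ) ^ (k + 1)) := Real.rpow_nonneg hρ.le _
    rw [add_mul]
    cases L with
    | nil =>
      refine (hbase (k + 1) R hR ρ hρ hρ1).trans (le_add_of_nonneg_right ?_)
      positivity
    | cons j L =>
      have h := hC (fun x => (Real.arctan x : ℂ)) (fun x => ((1 + x ^ 2)⁻¹ : ℝ))
        (fun x => by simpa using (Real.hasDerivAt_arctan x).ofReal_comp)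
        (Complex.continuous_ofReal.comp ((continuous_const.add (continuous_id.pow 2)).inv₀
          fun x => (by positivity : (0 : ℝ) < 1 + x ^ 2).ne'))
        (fun x => by
          rw [Complex.norm_real, Real.norm_eq_abs, abs_le]
          constructor <;> linarith [Real.pi_le_four, Real.arctan_lt_pi_div_two x,
            Real.neg_pi_div_two_lt_arctan x])
        (fun x => by
          rw [Complex.norm_real, Real.norm_of_nonneg (by positivity)]
          exact inv_le_one_of_one_le₀ (by nlinarith [sq_nonneg x]))
        R hRD hRM j K
        (hK _ ((totalDegree_pderiv_le j R).trans hRD) (abs_coeff_pderiv_le j hRD hRM) L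
          (by simpa using hL) hR) ρ hρ hρ1
      simp only [mul_one] at h
      rw [integral_complex_ofReal, Complex.norm_real, div_eq_mul_one_div, ← pow_succ] at h
      refine (Real.le_norm_self _).trans (h.trans (le_add_of_nonneg_left ?_))
      positivity

open MvPolynomial in
theorem exists_norm_setIntegral_cexp_le {n : ℕ} (D : ℕ) {a b : Fin (n + 1) → ℝ} (hle : a ≤ b)
    {M c : ℝ} (hM : 0 ≤ M) (hc : 0 < c) {ψ : (Fin (n + 1) → ℝ) → ℂ} (hψ : ContDiff ℝ 1 ψ) :
    ∃ C > (0 : ℝ), ∀ Q : MvPolynomial (Fin (n + 1)) ℝ, Q.totalDegree ≤ D →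
      (∀ m, |Q.coeff m| ≤ M) → ∀ L : List (Fin (n + 1)), 1 ≤ L.length → L.length ≤ D →
      (∀ t ∈ Set.Icc a b, c ≤ |eval t (L.foldl (fun R i => pderiv i R) Q)|) →
      ∀ ξ : ℝ, ξ ≠ 0 →
        ‖∫ x in Set.Icc a b, Complex.exp (Complex.I * ξ * (eval x Q : ℂ)) * ψ x‖ ≤
          C * |ξ| ^ (-(1 / 4 : ℝ) ^ (D + 1)) := by
  obtain ⟨K, hK0, hK⟩ := exists_setIntegral_inv_one_add_sq_le D hle hc D (M * D) (by positivity)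
  obtain ⟨C, hC0, hC⟩ := exists_norm_setIntegral_comp_div_le (D := D) hle hM
      (κ := (1 / 4 : ℝ) ^ D) (pow_le_one₀ (by norm_num) (by norm_num)) hψ
  obtain ⟨B, hB⟩ := isCompact_Icc.exists_bound_of_continuousOn
    (hψ.continuous.continuousOn (s := Set.Icc a b))
  have hB0 : 0 ≤ B := (norm_nonneg _).trans (hB a (Set.left_mem_Icc.2 hle))
  set V := volume.real (Set.Icc a b)
  have hV0 : 0 ≤ V := measureReal_nonneg
  refine ⟨C * (1 + K) + B * V, by positivity, fun Q hQD hQM L hL1 hLD hQ ξ hξ => ?_⟩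
  have hξ0 : 0 < |ξ| := abs_pos.2 hξ
  rcases le_total |ξ| 1 with h1 | h1
  · have hone : 1 ≤ |ξ| ^ (-(1 / 4 : ℝ) ^ (D + 1)) :=
      Real.one_le_rpow_of_pos_of_le_one_of_nonpos hξ0 h1 (neg_nonpos.2 (by positivity))
    have htriv : ‖∫ x in Set.Icc a b, Complex.exp (Complex.I * ξ * (eval x Q : ℂ)) * ψ x‖ ≤
        B * V := by
      refine norm_setIntegral_le_of_norm_le_const isCompact_Icc.measure_lt_top fun x hx => ?_
      rw [norm_mul, mul_assoc, ← Complex.ofReal_mul, Complex.norm_exp_I_mul_ofReal, one_mul]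
      exact hB x hx
    calc _ ≤ B * V := htriv
      _ ≤ (C * (1 + K) + B * V) * 1 := by nlinarith [mul_nonneg hC0.le (by positivity : 0 ≤ 1 + K)]
      _ ≤ _ := by gcongr
  obtain ⟨s, hs, hsξ⟩ : ∃ s : ℝ, |s| = 1 ∧ ξ = s * |ξ| := by
    rcases abs_cases ξ with ⟨h, _⟩ | ⟨h, _⟩
    · exact ⟨1, by simp, by simp [h]⟩
    · exact ⟨-1, by simp, by simp [h]⟩
  have hs2 : (s : ℂ) * s = 1 := by
    rw [← Complex.ofReal_mul, ← abs_mul_abs_self, hs]; simp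
  cases L with
  | nil => simp at hL1
  | cons j L =>
    have h := hC (fun x => -(Complex.I * s) * Complex.exp (Complex.I * (s * x : ℝ)))
      (fun x => Complex.exp (Complex.I * (s * x : ℝ)))
      (fun x => by
        have hlin := (((hasDerivAt_id x).const_mul s).ofReal_comp.const_mul Complex.I).cexp.const_mul
          (-(Complex.I * s))
        refine hlin.congr_deriv ?_
        simp only [id, mul_one]
        linear_combination Complex.exp (Complex.I * (s * x : ℝ)) * (hs2 - (s : ℂ) ^ 2 * Complex.I_sq))
      (by fun_prop)
      (fun x => by
        rw [norm_mul, Complex.norm_exp_I_mul_ofReal, norm_neg, norm_mul, Complex.norm_I,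
          Complex.norm_real, Real.norm_eq_abs, hs]
        norm_num)
      (fun x => (Complex.norm_exp_I_mul_ofReal _).le)
      Q hQD hQM j K
      (hK _ ((totalDegree_pderiv_le j Q).trans hQD) (abs_coeff_pderiv_le j hQD hQM) L
        ((Nat.le_succ _).trans hLD) hQ) |ξ|⁻¹ (inv_pos.2 hξ0) (inv_le_one_of_one_le₀ h1)
    rw [div_eq_mul_one_div, ← pow_succ, Real.inv_rpow hξ0.le, ← Real.rpow_neg hξ0.le] at h
    have hphase : ∀ x : Fin (n + 1) → ℝ, Complex.exp (Complex.I * ξ * (eval x Q : ℂ)) =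
        Complex.exp (Complex.I * ((s * (eval x Q / |ξ|⁻¹) : ℝ) : ℂ)) := fun x => by
      rw [div_inv_eq_mul, mul_comm (eval x Q), ← mul_assoc, ← hsξ, Complex.ofReal_mul, mul_assoc]
    simp only [hphase]
    refine h.trans ?_
    gcongr
    exact le_add_of_nonneg_right (by positivity)


/-- Van der Corput-type decay: if `Q₁, Q₂` are polynomials of degree at most `D` with
coefficients bounded by `M` and some iterated partial derivative (of order between 1
and `D`) of each is bounded below by `c` on `[1/2,4]ⁿ`, then the oscillatory integral
`∫ (e^{iξQ₁(t)} − e^{iξQ₂(t)}) η(t₁)⋯η(tₙ) dt` is `O(|ξ|^{-ε})`, with constants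
depending only on `n, D, M, c, η`. -/
theorem stmt15 (n D : ℕ) (M c : ℝ) (hD : 1 ≤ D) (hM : 0 < M) (hc : 0 < c)
    (η : ℝ → ℝ) (hηsupp : Function.support η ⊆ Set.Icc (1/2 : ℝ) 4)
    (hηsm : ContDiff ℝ (⊤ : ℕ∞) η) (hη1 : ∀ s ∈ Set.Icc (1:ℝ) 2, η s = 1) :
    ∃ C > (0:ℝ), ∃ ε > (0:ℝ), ∀ Q₁ Q₂ : MvPolynomial (Fin n) ℝ,
      Q₁.totalDegree ≤ D → Q₂.totalDegree ≤ D →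
      (∀ m, |Q₁.coeff m| ≤ M) → (∀ m, |Q₂.coeff m| ≤ M) →
      (∃ L : List (Fin n), 1 ≤ L.length ∧ L.length ≤ D ∧
        (∀ t ∈ Set.univ.pi (fun _ : Fin n => Set.Icc (1/2 : ℝ) 4),
          c ≤ |MvPolynomial.eval t (L.foldl (fun R i => MvPolynomial.pderiv i R) Q₁)|) ∧
        (∀ t ∈ Set.univ.pi (fun _ : Fin n => Set.Icc (1/2 : ℝ) 4),
          c ≤ |MvPolynomial.eval t (L.foldl (fun R i => MvPolynomial.pderiv i R) Q₂)|)) →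
      ∀ ξ : ℝ, ξ ≠ 0 →
        ‖∫ t in Set.univ.pi (fun _ : Fin n => Set.Icc (1/2 : ℝ) 4),
            (Complex.exp (Complex.I * (ξ : ℂ) * (MvPolynomial.eval t Q₁ : ℂ)) -
              Complex.exp (Complex.I * (ξ : ℂ) * (MvPolynomial.eval t Q₂ : ℂ))) *
            ((∏ i, η (t i) : ℝ) : ℂ)‖
          ≤ C * |ξ| ^ (-ε) := by
  rcases n with _ | n
  · exact ⟨1, one_pos, 1, one_pos, fun _ _ _ _ _ _ ⟨L, hL, _⟩ => by
      cases L with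
      | nil => simp at hL
      | cons i _ => exact i.elim0⟩
  have hψ : ContDiff ℝ 1 fun t : Fin (n + 1) → ℝ => ((∏ i, η (t i) : ℝ) : ℂ) := by
    have hη : ContDiff ℝ 1 η := hηsm.of_le (by exact_mod_cast le_top)
    have hprod : ContDiff ℝ 1 fun t : Fin (n + 1) → ℝ => ∏ i, η (t i) :=
      contDiff_prod fun i _ => hη.comp (contDiff_apply ℝ ℝ i)
    exact Complex.ofRealCLM.contDiff.comp hprod
  obtain ⟨C, hC0, hC⟩ := exists_norm_setIntegral_cexp_le D
    (a := fun _ : Fin (n + 1) => (1 / 2 : ℝ)) (b := fun _ => 4) (fun _ => by norm_num) hM.le hc hψ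
  refine ⟨2 * C, by positivity, (1 / 4 : ℝ) ^ (D + 1), by positivity, ?_⟩
  rintro Q₁ Q₂ hD₁ hD₂ hM₁ hM₂ ⟨L, hL1, hLD, h₁, h₂⟩ ξ hξ
  rw [Set.pi_univ_Icc] at h₁ h₂ ⊢
  have hint : ∀ Q : MvPolynomial (Fin (n + 1)) ℝ, IntegrableOn
      (fun t : Fin (n + 1) → ℝ => Complex.exp (Complex.I * (ξ : ℂ) * (MvPolynomial.eval t Q : ℂ)) *
        ((∏ i, η (t i) : ℝ) : ℂ)) (Set.Icc (fun _ => 1 / 2) fun _ => 4) := fun Q =>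
    ((Complex.continuous_exp.comp (continuous_const.mul
      (Complex.continuous_ofReal.comp Q.contDiff_eval.continuous))).mul
        hψ.continuous).integrableOn_Icc
  simp only [sub_mul]
  rw [integral_sub (hint Q₁) (hint Q₂)]
  refine (norm_sub_le _ _).trans ?_
  linarith [hC Q₁ hD₁ hM₁ L hL1 hLD h₁ ξ hξ, hC Q₂ hD₂ hM₂ L hL1 hLD h₂ ξ hξ]
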